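/- arXiv:2405.13458 — 2 statements merged into one kernel-verified Lean document; each statement's English description precedes it below -/
import Mathlib

section
/- Let λ ≥ 2 and n ≥ 1 be integers. Let S be a rational trigonometric polynomial nonnegative on ℝⁿ, let s be a rational trigonometric polynomial with |s(ξ)|² = 1/S(ξ) wherever defined, let p_1, …, p_{λ^n} be rational trigonometric polynomials, let ν_1, …, ν_{λ^n} enumerate Λ, and define τ(ξ) = (λ^{−n} Σ_{l=1}^{λ^n} p_l(λξ) e^{i ν_l·ξ}) / conj(s(ξ)). Then for all ξ at which both sides are defined, Σ_{γ∈Γ} |τ(ξ + γ)|² / S(ξ + γ) = λ^{−n} Σ_{l=1}^{λ^n} |p_l(λξ)|². -/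
open MeasureTheory Finset Filter Topology

noncomputable section

/-- `f` is a trigonometric polynomial on ℝⁿ: a finite sum ξ ↦ Σ_{k∈F} h(k) e^{−i k·ξ}. -/
def IsTrigPoly (n : ℕ) (f : (Fin n → ℝ) → ℂ) : Prop :=
  ∃ (F : Finset (Fin n → ℤ)) (h : (Fin n → ℤ) → ℂ),
    ∀ ξ : Fin n → ℝ,
      f ξ = ∑ k ∈ F, h k * Complex.exp (-Complex.I * ∑ i, (k i : ℂ) * (ξ i : ℂ))

/-- Λ = {0,…,λ−1}ⁿ as a finite subset of ℤⁿ. -/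
def Lambda (lam n : ℕ) : Finset (Fin n → ℤ) :=
  Fintype.piFinset fun _ => Finset.Ico (0 : ℤ) (lam : ℤ)

/-- The translate ξ + (2π/λ)·ρ, i.e. ξ + γ for γ = (2π/λ)ρ ∈ Γ. -/
def gshift (lam n : ℕ) (ξ : Fin n → ℝ) (ρ : Fin n → ℤ) : Fin n → ℝ :=
  fun i => ξ i + (2 * Real.pi / lam) * (ρ i : ℝ)

/-- e^{i ν·ξ}. -/
def eI (n : ℕ) (ν : Fin n → ℤ) (ξ : Fin n → ℝ) : ℂ :=
  Complex.exp (Complex.I * ∑ i, (ν i : ℂ) * (ξ i : ℂ))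

/-- The dilate λ·ξ. -/
def dil (lam n : ℕ) (ξ : Fin n → ℝ) : Fin n → ℝ := fun i => (lam : ℝ) * ξ i
/-- A rational trigonometric polynomial: a quotient of two trigonometric polynomials
(with denominator not identically zero).  Its value at ξ (using Lean's total division,
with junk value 0 where the denominator vanishes) is `num ξ / den ξ`; it is *defined*
at ξ precisely when `den ξ ≠ 0`. -/
structure RatTrigPoly (n : ℕ) where
  num : (Fin n → ℝ) → ℂ
  den : (Fin n → ℝ) → ℂ
  num_trig : IsTrigPoly n num
  den_trig : IsTrigPoly n den
  den_ne : ∃ ξ, den ξ ≠ 0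

/-- Pointwise value of a rational trigonometric polynomial. -/
def RatTrigPoly.eval {n : ℕ} (f : RatTrigPoly n) (ξ : Fin n → ℝ) : ℂ := f.num ξ / f.den ξ

instance {n : ℕ} : CoeFun (RatTrigPoly n) (fun _ => (Fin n → ℝ) → ℂ) := ⟨RatTrigPoly.eval⟩

/-- `f` is defined at `ξ` iff its denominator does not vanish there. -/
def RatTrigPoly.DefinedAt {n : ℕ} (f : RatTrigPoly n) (ξ : Fin n → ℝ) : Prop := f.den ξ ≠ 0

theorem aux_orth1 (lam : ℕ) (hlam : 2 ≤ lam) (d : ℤ) (h1 : -(lam : ℤ) < d) (h2 : d < lam) :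
    ∑ r ∈ Finset.Ico (0 : ℤ) (lam : ℤ),
      Complex.exp (Complex.I * ((d : ℂ) * ((2 * Real.pi / lam) * (r : ℂ))))
      = if d = 0 then (lam : ℂ) else 0 := by
  have hl : (lam : ℂ) ≠ 0 := by
    have : lam ≠ 0 := by omega
    exact_mod_cast this
  set z : ℂ := Complex.exp (2 * Real.pi * Complex.I * ((d : ℂ) / lam)) with hz
  have hsum : ∑ r ∈ Finset.Ico (0 : ℤ) (lam : ℤ),
      Complex.exp (Complex.I * ((d : ℂ) * ((2 * Real.pi / lam) * (r : ℂ))))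
      = ∑ k ∈ Finset.range lam, z ^ k := by
    symm
    refine Finset.sum_nbij' (fun k => (k : ℤ)) Int.toNat ?_ ?_ ?_ ?_ ?_
    · intro k hk
      simp at hk ⊢
      omega
    · intro k hk
      simp at hk ⊢
      omega
    · intro k hk
      simp
    · intro k hk
      simp at hk ⊢
      omega
    · intro k hk
      rw [hz, ← Complex.exp_nat_mul]
      congr 1
      push_cast
      field_simp
  rw [hsum]
  split_ifs with hd
  · have : z = 1 := by simp [hz, hd]
    simp [this]
  · have hz1 : z ≠ 1 := by
      intro h
      rw [hz, Complex.exp_eq_one_iff] at h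
      obtain ⟨m, hm⟩ := h
      have hpi : (2 * Real.pi * Complex.I : ℂ) ≠ 0 := Complex.two_pi_I_ne_zero
      rw [mul_comm (m : ℂ)] at hm
      have h3 := mul_left_cancel₀ hpi hm
      rw [div_eq_iff hl] at h3
      have h4 : d = m * lam := by exact_mod_cast h3
      have : m = 0 := by
        by_contra hm0
        rcases lt_or_gt_of_ne hm0 with h | h <;> nlinarith
      exact hd (by simp [h4, this])
    have hzl : z ^ lam = 1 := by
      rw [hz, ← Complex.exp_nat_mul, Complex.exp_eq_one_iff]
      exact ⟨d, by field_simp⟩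
    rw [geom_sum_eq hz1, hzl]
    simp

theorem aux_eI_conj (n : ℕ) (μ ν : Fin n → ℤ) (ξ : Fin n → ℝ) :
    eI n μ ξ * (starRingEnd ℂ) (eI n ν ξ) = eI n (μ - ν) ξ := by
  unfold eI
  rw [← Complex.exp_conj, ← Complex.exp_add]
  congr 1
  simp only [map_mul, map_sum, Complex.conj_I, Complex.conj_ofReal, map_intCast, Pi.sub_apply]
  push_cast
  simp only [sub_mul, Finset.sum_sub_distrib]
  ring

theorem aux_eI_gshift (lam n : ℕ) (μ ρ : Fin n → ℤ) (ξ : Fin n → ℝ) :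
    eI n μ (gshift lam n ξ ρ) = eI n μ ξ *
      ∏ i, Complex.exp (Complex.I * ((μ i : ℂ) * ((2 * Real.pi / lam) * (ρ i : ℂ)))) := by
  unfold eI gshift
  rw [← Complex.exp_sum, ← Complex.exp_add, ← Finset.mul_sum]
  congr 1
  push_cast
  simp only [mul_add, Finset.sum_add_distrib]

theorem aux_orth (lam n : ℕ) (hlam : 2 ≤ lam) (ξ : Fin n → ℝ) (μ ν : Fin n → ℤ)
    (hμ : μ ∈ Lambda lam n) (hν : ν ∈ Lambda lam n) :
    ∑ ρ ∈ Lambda lam n, eI n μ (gshift lam n ξ ρ) *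
      (starRingEnd ℂ) (eI n ν (gshift lam n ξ ρ))
      = if μ = ν then (lam : ℂ) ^ n else 0 := by
  simp only [aux_eI_conj]
  simp only [aux_eI_gshift]
  rw [← Finset.mul_sum]
  have hp := Finset.prod_univ_sum (fun _ : Fin n => Finset.Ico (0 : ℤ) (lam : ℤ))
    (fun i r => Complex.exp (Complex.I * (((μ - ν) i : ℤ) * ((2 * Real.pi / lam) * (r : ℂ)))))
  unfold Lambda at *
  rw [← hp]
  simp only [Fintype.mem_piFinset, Finset.mem_Ico] at hμ hν
  have h1 : ∀ i : Fin n, ∑ r ∈ Finset.Ico (0 : ℤ) (lam : ℤ),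
      Complex.exp (Complex.I * (((μ - ν) i : ℤ) * ((2 * Real.pi / lam) * (r : ℂ))))
      = if (μ - ν) i = 0 then (lam : ℂ) else 0 := by
    intro i
    have := hμ i
    have := hν i
    apply aux_orth1 lam hlam <;> simp only [Pi.sub_apply] <;> omega
  rw [Finset.prod_congr rfl (fun i _ => h1 i)]
  split_ifs with h
  · subst h
    simp [eI]
  · obtain ⟨i, hi⟩ := Function.ne_iff.mp h
    rw [Finset.prod_eq_zero (Finset.mem_univ i), mul_zero]
    rw [if_neg]
    simpa [sub_eq_zero] using hi

theorem aux_per (lam n : ℕ) (hlam : 2 ≤ lam) (f : (Fin n → ℝ) → ℂ) (hf : IsTrigPoly n f)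
    (ξ : Fin n → ℝ) (ρ : Fin n → ℤ) :
    f (dil lam n (gshift lam n ξ ρ)) = f (dil lam n ξ) := by
  obtain ⟨F, h, hf⟩ := hf
  have hl : (lam : ℂ) ≠ 0 := by
    have : lam ≠ 0 := by omega
    exact_mod_cast this
  rw [hf, hf]
  refine Finset.sum_congr rfl fun k _ => ?_
  congr 1
  rw [Complex.exp_eq_exp_iff_exists_int]
  refine ⟨-∑ i, k i * ρ i, ?_⟩
  unfold dil gshift
  push_cast
  rw [neg_mul, neg_mul, neg_mul, Finset.mul_sum, Finset.mul_sum, Finset.sum_mul, ← neg_add,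
    ← Finset.sum_add_distrib]
  congr 1
  refine Finset.sum_congr rfl fun i _ => ?_
  field_simp

theorem aux_norm_sq (z : ℂ) : ((‖z‖ ^ 2 : ℝ) : ℂ) = z * (starRingEnd ℂ) z := by
  rw [Complex.mul_conj, Complex.normSq_eq_norm_sq]

/-- with τ(ξ) = (λ^{−n} Σ_l p_l(λξ) e^{iν_l·ξ})/conj(s(ξ)) and
|s|² = 1/S wherever defined, one has
Σ_{γ∈Γ} |τ(ξ+γ)|²/S(ξ+γ) = λ^{−n} Σ_l |p_l(λξ)|² wherever everything is defined. -/
theorem oblique_sum_sq_mask_translates (lam n : ℕ) (hlam : 2 ≤ lam) (hn : 1 ≤ n)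
    (S : RatTrigPoly n)
    (hSreal : ∀ ξ, S.DefinedAt ξ → (S ξ).im = 0 ∧ 0 ≤ (S ξ).re)
    (s : RatTrigPoly n)
    (hs : ∀ ξ, s.DefinedAt ξ → S.DefinedAt ξ → S ξ ≠ 0 →
      ((‖s ξ‖ ^ 2 : ℝ) : ℂ) = (S ξ)⁻¹)
    (p : Fin (lam ^ n) → RatTrigPoly n)
    (ν : Fin (lam ^ n) → Fin n → ℤ)
    (hν_inj : Function.Injective ν) (hν_mem : ∀ l, ν l ∈ Lambda lam n)
    (hν_surj : ∀ ρ ∈ Lambda lam n, ∃ l, ν l = ρ)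
    (τ : (Fin n → ℝ) → ℂ)
    (hτ : ∀ ξ, τ ξ = (((lam : ℂ) ^ n)⁻¹ * ∑ l, p l (dil lam n ξ) * eI n (ν l) ξ)
      / (starRingEnd ℂ) (s ξ))
    (ξ : Fin n → ℝ)
    (hdef : ∀ ρ ∈ Lambda lam n,
      s.DefinedAt (gshift lam n ξ ρ) ∧ s (gshift lam n ξ ρ) ≠ 0 ∧
      S.DefinedAt (gshift lam n ξ ρ) ∧ S (gshift lam n ξ ρ) ≠ 0 ∧
      ∀ l, (p l).DefinedAt (dil lam n (gshift lam n ξ ρ)))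
    (hdef' : ∀ l, (p l).DefinedAt (dil lam n ξ)) :
    ∑ ρ ∈ Lambda lam n,
        ((‖τ (gshift lam n ξ ρ)‖ ^ 2 : ℝ) : ℂ) / S (gshift lam n ξ ρ)
      = ((lam : ℂ) ^ n)⁻¹ * ∑ l, ((‖p l (dil lam n ξ)‖ ^ 2 : ℝ) : ℂ) := by
  have hl : (lam : ℂ) ≠ 0 := by
    have : lam ≠ 0 := by omega
    exact_mod_cast this
  have hterm : ∀ ρ ∈ Lambda lam n,
      ((‖τ (gshift lam n ξ ρ)‖ ^ 2 : ℝ) : ℂ) / S (gshift lam n ξ ρ)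
      = (((lam : ℂ) ^ n)⁻¹) ^ 2 * ∑ l, ∑ m,
        (p l (dil lam n ξ) * (starRingEnd ℂ) (p m (dil lam n ξ))) *
        (eI n (ν l) (gshift lam n ξ ρ) * (starRingEnd ℂ) (eI n (ν m) (gshift lam n ξ ρ))) := by
    intro ρ hρ
    obtain ⟨h1, h2, h3, h4, -⟩ := hdef ρ hρ
    have hp : ∀ l, p l (dil lam n (gshift lam n ξ ρ)) = p l (dil lam n ξ) := by
      intro l
      unfold RatTrigPoly.eval
      rw [aux_per lam n hlam _ (p l).num_trig, aux_per lam n hlam _ (p l).den_trig]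
    rw [div_eq_mul_inv, ← hs _ h1 h3 h4, aux_norm_sq, aux_norm_sq, hτ]
    simp only [hp]
    have h5 : (starRingEnd ℂ) (s (gshift lam n ξ ρ)) ≠ 0 := by simpa using h2
    simp only [map_div₀, map_mul, Complex.conj_conj, map_inv₀, map_pow, map_natCast]
    have h6 : ∀ a b c d e : ℂ, d ≠ 0 → e ≠ 0 →
        (a * b) / d * (a * c / e) * (e * d) = a ^ 2 * (b * c) := by
      intro a b c d e hd he
      field_simp
    rw [h6 _ _ _ _ _ h5 h2, map_sum, Finset.sum_mul_sum]
    congr 1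
    refine Finset.sum_congr rfl fun l _ => Finset.sum_congr rfl fun m _ => ?_
    rw [map_mul]
    ring
  rw [Finset.sum_congr rfl hterm, ← Finset.mul_sum, Finset.sum_comm]
  have hl2 : ∀ l, ∑ ρ ∈ Lambda lam n, ∑ m,
        (p l (dil lam n ξ) * (starRingEnd ℂ) (p m (dil lam n ξ))) *
        (eI n (ν l) (gshift lam n ξ ρ) * (starRingEnd ℂ) (eI n (ν m) (gshift lam n ξ ρ)))
      = (lam : ℂ) ^ n * ((‖p l (dil lam n ξ)‖ ^ 2 : ℝ) : ℂ) := by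
    intro l
    rw [Finset.sum_comm]
    simp only [← Finset.mul_sum]
    rw [Finset.sum_congr rfl (fun m _ => by
      rw [aux_orth lam n hlam ξ _ _ (hν_mem l) (hν_mem m)])]
    simp only [hν_inj.eq_iff]
    rw [aux_norm_sq]
    simp [mul_comm]
  rw [Finset.sum_congr rfl (fun l _ => hl2 l), ← Finset.mul_sum, ← mul_assoc]
  congr 1
  field_simp
end
end

section
/- Let λ ≥ 2 and n ≥ 1 be integers. Let S be a nonzero rational trigonometric polynomial, nonnegative on ℝⁿ, continuous at 0 with S(0) = 1 and 1/S ∈ L^∞, and let τ be a rational trigonometric polynomial with τ(0) = 1. Suppose the oblique sub-QMF condition holds: 1/S(λξ) − Σ_{γ∈Γ} |τ(ξ + γ)|²/S(ξ + γ) ≥ 0 for all ξ at which this expression is defined. Then the infinite product Φ(ξ) := Π_{j=1}^∞ τ(λ^{−j}ξ) converges for almost every ξ ∈ ℝⁿ, the resulting function Φ belongs to L²(ℝⁿ), and Φ(λξ) = τ(ξ) Φ(ξ) for almost every ξ; consequently the inverse Fourier transform φ_τ of Φ is a refinable function in L²(ℝⁿ) with refinement mask τ. -/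
open MeasureTheory Finset Filter Topology

noncomputable section

/-- The Fourier integral ĝ(x) = ∫ g(ξ) e^{−i x·ξ} dξ (defined as a Bochner integral;
junk value 0 if not integrable). -/
def fourierInt (n : ℕ) (g : (Fin n → ℝ) → ℂ) (x : Fin n → ℝ) : ℂ :=
  ∫ ξ : Fin n → ℝ, g ξ * Complex.exp (-Complex.I * ∑ i, (x i : ℂ) * (ξ i : ℂ))

/-- `Φ` is the Fourier transform of `φ` in the L² (Plancherel) sense: both are in L²
and the multiplication formula ∫ Φ·g = ∫ φ·ĝ holds for every test function
g ∈ L¹ ∩ L². -/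
def IsL2FourierPair (n : ℕ) (φ Φ : (Fin n → ℝ) → ℂ) : Prop :=
  MeasureTheory.MemLp φ 2 MeasureTheory.volume ∧
  MeasureTheory.MemLp Φ 2 MeasureTheory.volume ∧
  ∀ g : (Fin n → ℝ) → ℂ, MeasureTheory.Integrable g MeasureTheory.volume →
    MeasureTheory.MemLp g 2 MeasureTheory.volume →
    ∫ ξ : Fin n → ℝ, Φ ξ * g ξ = ∫ x : Fin n → ℝ, φ x * fourierInt n g x
/-! ### Trigonometric polynomials -/

lemma IsTrigPoly.analytic {n : ℕ} {f : (Fin n → ℝ) → ℂ} (hf : IsTrigPoly n f) :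
    AnalyticOnNhd ℝ f Set.univ := by
  obtain ⟨F, h, hf⟩ := hf
  have : f = fun ξ => ∑ k ∈ F, h k * Complex.exp (-Complex.I * ∑ i, (k i : ℂ) * (ξ i : ℂ)) :=
    funext hf
  rw [this]
  intro x _
  have key : ∀ i : Fin n, AnalyticAt ℝ (fun ξ : Fin n → ℝ => ((ξ i : ℝ) : ℂ)) x := fun i =>
    ((Complex.ofRealCLM.comp (ContinuousLinearMap.proj (R := ℝ) (φ := fun _ : Fin n => ℝ) i)
      ).analyticAt x)
  refine Finset.analyticAt_fun_sum _ fun k _ => ?_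
  refine analyticAt_const.mul ?_
  have h1 : AnalyticAt ℝ (fun ξ : Fin n → ℝ => -Complex.I * ∑ i, (k i : ℂ) * (ξ i : ℂ)) x :=
    analyticAt_const.mul (Finset.analyticAt_fun_sum _ fun i _ => analyticAt_const.mul (key i))
  exact (analyticAt_cexp.restrictScalars (𝕜 := ℝ)).comp h1

lemma analytic_ae_ne_zero : ∀ (n : ℕ) (f : (Fin n → ℝ) → ℂ), AnalyticOnNhd ℝ f Set.univ →
    (∃ x, f x ≠ 0) → ∀ᵐ x : Fin n → ℝ, f x ≠ 0 := by
  intro n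
  induction n with
  | zero =>
    rintro f - ⟨x, hx⟩
    refine ae_of_all _ fun y => ?_
    rwa [Subsingleton.elim y x]
  | succ n ih =>
    rintro f hf ⟨x0, hx0⟩
    have hfc : Continuous f := continuousOn_univ.1 hf.continuousOn
    let e := MeasurableEquiv.piFinSuccAbove (fun _ : Fin (n+1) => ℝ) 0
    have he : MeasurePreserving e.symm := (volume_preserving_piFinSuccAbove (fun _ => ℝ) 0).symm
    have hms : MeasurableSet {x | f x ≠ 0} := (isOpen_ne_fun hfc continuous_const).measurableSet
    rw [← he.map_eq, ae_map_iff he.measurable.aemeasurable hms]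
    have hms2 : MeasurableSet {p : ℝ × (Fin n → ℝ) | f (e.symm p) ≠ 0} := he.measurable hms
    rw [Measure.volume_eq_prod, Measure.ae_prod_iff_ae_ae hms2]
    have h1 : ∀ᵐ x : ℝ, f (Fin.cons x (Fin.tail x0)) ≠ 0 := by
      have ha : AnalyticOnNhd ℝ (fun x : ℝ => f (Fin.cons x (Fin.tail x0))) Set.univ := by
        refine AnalyticOnNhd.comp (g := f) (t := Set.univ) hf ?_ (by simp)
        intro x _
        rw [analyticAt_pi_iff]
        intro i
        refine Fin.cases ?_ (fun j => ?_) i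
        · simpa using! analyticAt_id
        · simpa using! analyticAt_const
      have hc := ha.preimage_zero_mem_codiscrete (x := x0 0) (by simpa using hx0)
      have := ae_restrict_le_codiscreteWithin (μ := (volume : Measure ℝ))
        (U := (Set.univ : Set ℝ)) MeasurableSet.univ hc
      rw [Measure.restrict_univ] at this
      filter_upwards [this] with x hx
      simpa using hx
    filter_upwards [h1] with x hx
    have ha : AnalyticOnNhd ℝ (fun y : Fin n → ℝ => f (Fin.cons x y)) Set.univ := by
      refine AnalyticOnNhd.comp (g := f) (t := Set.univ) hf ?_ (by simp)
      intro y _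
      rw [analyticAt_pi_iff]
      intro i
      refine Fin.cases ?_ (fun j => ?_) i
      · simpa using! analyticAt_const
      · simpa using! ((ContinuousLinearMap.proj (R := ℝ) (φ := fun _ : Fin n => ℝ) j).analyticAt y)
    have := ih _ ha ⟨_, hx⟩
    filter_upwards [this] with y hy
    simpa [e, MeasurableEquiv.piFinSuccAbove, Fin.insertNthEquiv] using hy

lemma IsTrigPoly.ae_ne_zero {n : ℕ} {f : (Fin n → ℝ) → ℂ} (hf : IsTrigPoly n f)
    (h : ∃ x, f x ≠ 0) : ∀ᵐ x : Fin n → ℝ, f x ≠ 0 :=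
  analytic_ae_ne_zero n f hf.analytic h

lemma IsTrigPoly.continuous {n : ℕ} {f : (Fin n → ℝ) → ℂ} (hf : IsTrigPoly n f) :
    Continuous f := continuousOn_univ.1 hf.analytic.continuousOn

lemma IsTrigPoly.periodic {n : ℕ} {f : (Fin n → ℝ) → ℂ} (hf : IsTrigPoly n f)
    (x : Fin n → ℝ) (m : Fin n → ℤ) : f (fun i => x i + m i * (2 * Real.pi)) = f x := by
  obtain ⟨F, h, hf⟩ := hf
  rw [hf, hf]
  refine Finset.sum_congr rfl fun k _ => ?_
  congr 1
  rw [Complex.exp_eq_exp_iff_exists_int]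
  refine ⟨-∑ i, k i * m i, ?_⟩
  push_cast
  have e1 : ∑ j, (k j : ℂ) * ((x j : ℂ) + (m j : ℂ) * (2 * (Real.pi : ℂ)))
      = ∑ j, (k j : ℂ) * (x j : ℂ) + (∑ j, (k j : ℂ) * (m j : ℂ)) * (2 * (Real.pi : ℂ)) := by
    rw [Finset.sum_mul, ← Finset.sum_add_distrib]
    exact Finset.sum_congr rfl fun j _ => by ring
  rw [e1]
  ring

lemma RatTrigPoly.measurable {n : ℕ} (f : RatTrigPoly n) : Measurable (fun x => f x) :=
  f.num_trig.continuous.measurable.div f.den_trig.continuous.measurable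

lemma RatTrigPoly.periodic {n : ℕ} (f : RatTrigPoly n)
    (x : Fin n → ℝ) (m : Fin n → ℤ) : f (fun i => x i + m i * (2 * Real.pi)) = f x := by
  simp only [RatTrigPoly.eval, f.num_trig.periodic, f.den_trig.periodic]

lemma RatTrigPoly.ae_defined {n : ℕ} (f : RatTrigPoly n) :
    ∀ᵐ x : Fin n → ℝ, f.DefinedAt x := f.den_trig.ae_ne_zero f.den_ne

lemma RatTrigPoly.ae_ne_zero {n : ℕ} (f : RatTrigPoly n) (h : ∃ x, f x ≠ 0) :
    ∀ᵐ x : Fin n → ℝ, f x ≠ 0 := by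
  obtain ⟨x, hx⟩ := h
  have : ∀ᵐ x : Fin n → ℝ, f.num x ≠ 0 := f.num_trig.ae_ne_zero
    ⟨x, fun h0 => hx (by simp [RatTrigPoly.eval, h0])⟩
  filter_upwards [this, f.ae_defined] with y h1 h2
  exact div_ne_zero h1 h2

lemma RatTrigPoly.lipschitz_at {n : ℕ} (f : RatTrigPoly n) (hd : f.DefinedAt 0) (h0 : f 0 = 1) :
    ∃ C : ℝ, ∃ δ > 0, ∀ x : Fin n → ℝ, ‖x‖ < δ → ‖f x - 1‖ ≤ C * ‖x‖ := by
  have hdiff : DifferentiableAt ℝ (fun x => f x) 0 :=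
    ((f.num_trig.analytic 0 trivial).div (f.den_trig.analytic 0 trivial) hd).differentiableAt
  have := hdiff.isBigO_sub
  obtain ⟨C, hC⟩ := this.bound
  rw [Metric.eventually_nhds_iff] at hC
  obtain ⟨δ, hδ, h⟩ := hC
  refine ⟨C, δ, hδ, fun x hx => ?_⟩
  have := h (y := x) (by simpa using hx)
  simpa [h0] using this

lemma prod_converges {n lam : ℕ} (hlam : 2 ≤ lam) (τ : RatTrigPoly n) (hd : τ.DefinedAt 0)
    (h0 : τ 0 = 1) (ξ : Fin n → ℝ) : ∃ L : ℂ, Filter.Tendsto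
          (fun M : ℕ => ∏ j ∈ Finset.Icc 1 M, τ (fun i => ξ i / (lam : ℝ) ^ j))
          Filter.atTop (𝓝 L) := by
  obtain ⟨C, δ, hδ, h⟩ := τ.lipschitz_at hd h0
  have hl : (1:ℝ) < lam := by exact_mod_cast hlam
  have hnorm : ∀ j : ℕ, ‖(fun i => ξ i / (lam : ℝ) ^ j)‖ = ‖ξ‖ * ((lam : ℝ)⁻¹) ^ j := by
    intro j
    have : (fun i => ξ i / (lam : ℝ) ^ j) = (((lam : ℝ)⁻¹) ^ j) • ξ := by
      ext i; simp [div_eq_inv_mul]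
    rw [this, norm_smul, mul_comm]
    simp
  have hinv : (lam : ℝ)⁻¹ < 1 := inv_lt_one_of_one_lt₀ hl
  have hgeo : Summable fun j : ℕ => ((lam : ℝ)⁻¹) ^ j :=
    summable_geometric_of_lt_one (by positivity) hinv
  have hsmall : ∀ᶠ j : ℕ in atTop, ‖(fun i => ξ i / (lam : ℝ) ^ j)‖ < δ := by
    have : Tendsto (fun j : ℕ => ‖ξ‖ * ((lam : ℝ)⁻¹) ^ j) atTop (𝓝 (‖ξ‖ * 0)) :=
      (tendsto_pow_atTop_nhds_zero_of_lt_one (by positivity) hinv).const_mul _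
    rw [mul_zero] at this
    simp_rw [hnorm]
    exact this.eventually_lt_const hδ
  have hsum : Summable fun j : ℕ => ‖τ (fun i => ξ i / (lam : ℝ) ^ (j+1)) - 1‖ := by
    have : Summable fun j : ℕ => ‖τ (fun i => ξ i / (lam : ℝ) ^ j) - 1‖ := by
      refine Summable.of_norm_bounded_eventually_nat ((hgeo.mul_left ‖ξ‖).mul_left C) ?_
      filter_upwards [hsmall] with j hj
      rw [norm_norm, ← hnorm]
      exact h _ hj
    exact (summable_nat_add_iff 1).2 this
  have hm := multipliable_one_add_of_summable hsum
  have := hm.hasProd.tendsto_prod_nat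
  simp only [add_sub_cancel] at this
  refine ⟨_, this.congr fun M => ?_⟩
  rw [Finset.range_eq_Ico, Finset.prod_Ico_add' (fun j => τ (fun i => ξ i / (lam : ℝ) ^ j)) 0 M 1]
  rfl

/-! ### Periodic functions and the torus -/

instance fact_two_pi : Fact (0 < 2 * Real.pi) := ⟨Real.two_pi_pos⟩

/-- The box `(-π, π]ⁿ`. -/
def tbox (n : ℕ) : Set (Fin n → ℝ) :=
  Set.univ.pi fun _ => Set.Ioc (-Real.pi) (-Real.pi + 2 * Real.pi)

lemma tbox_measurable (n : ℕ) : MeasurableSet (tbox n) :=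
  MeasurableSet.univ_pi fun _ => measurableSet_Ioc

lemma torus_mp (n : ℕ) : MeasurePreserving
    (fun (x : Fin n → ℝ) (i : Fin n) => ((x i : ℝ) : AddCircle (2 * Real.pi)))
    (volume.restrict (tbox n)) volume := by
  have := measurePreserving_pi (ι := Fin n) _ _
    (fun _ => AddCircle.measurePreserving_mk (2 * Real.pi) (-Real.pi))
  rw [← Measure.restrict_pi_pi] at this
  exact this

/-- Measurable functions that are `2π`-periodic in every coordinate. -/
def IsPer (n : ℕ) (G : (Fin n → ℝ) → ENNReal) : Prop :=
  ∀ (x : Fin n → ℝ) (m : Fin n → ℤ), G (fun i => x i + m i * (2 * Real.pi)) = G x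

lemma per_factor {n : ℕ} {G : (Fin n → ℝ) → ENNReal} (hG : Measurable G) (hp : IsPer n G) :
    ∃ g : (Fin n → AddCircle (2 * Real.pi)) → ENNReal, Measurable g ∧
      ∀ x : Fin n → ℝ, G x = g (fun i => (x i : AddCircle (2 * Real.pi))) := by
  refine ⟨fun y => G (fun i => (AddCircle.measurableEquivIoc (2 * Real.pi) 0 (y i) : ℝ)), ?_, ?_⟩
  · refine hG.comp (measurable_pi_lambda _ fun i => ?_)
    exact measurable_subtype_coe.comp
      ((AddCircle.measurableEquivIoc (2 * Real.pi) 0).measurable.comp (measurable_pi_apply i))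
  · intro x
    have h : ∀ i, ∃ m : ℤ, (AddCircle.measurableEquivIoc (2 * Real.pi) 0 (x i) : ℝ)
        = x i + m * (2 * Real.pi) := by
      intro i
      have h1 : (((AddCircle.measurableEquivIoc (2 * Real.pi) 0 (x i) : ℝ)) :
          AddCircle (2 * Real.pi)) = (x i : AddCircle (2 * Real.pi)) :=
        (AddCircle.equivIoc (2 * Real.pi) 0).symm_apply_apply _
      rw [← sub_eq_zero, ← AddCircle.coe_sub, AddCircle.coe_eq_zero_iff] at h1
      obtain ⟨m, hm⟩ := h1
      refine ⟨m, ?_⟩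
      rw [zsmul_eq_mul] at hm
      linarith
    choose m hm using h
    simp only [hm]
    rw [hp x m]

lemma per_translate {n : ℕ} {G : (Fin n → ℝ) → ENNReal} (hG : Measurable G) (hp : IsPer n G)
    (v : Fin n → ℝ) :
    ∫⁻ x in tbox n, G (fun i => x i + v i) = ∫⁻ x in tbox n, G x := by
  obtain ⟨g, hg, h⟩ := per_factor hG hp
  simp only [h, AddCircle.coe_add]
  have h2 := measurePreserving_add_right (volume : Measure (Fin n → AddCircle (2 * Real.pi)))
    (fun i => (v i : AddCircle (2 * Real.pi)))
  have e1 := (h2.comp (torus_mp n)).lintegral_comp hg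
  have e2 := (torus_mp n).lintegral_comp hg
  exact e1.trans e2.symm

lemma per_dilate {n lam : ℕ} (hlam : 2 ≤ lam) {G : (Fin n → ℝ) → ENNReal} (hG : Measurable G)
    (hp : IsPer n G) :
    ∫⁻ x in tbox n, G (dil lam n x) = ∫⁻ x in tbox n, G x := by
  obtain ⟨g, hg, h⟩ := per_factor hG hp
  have h2 : MeasurePreserving (fun (y : Fin n → AddCircle (2 * Real.pi)) (i : Fin n) =>
      ((lam : ℤ) • y i)) := volume_preserving_pi
    (fun _ => Measure.measurePreserving_zsmul volume (by omega))
  have e1 := (h2.comp (torus_mp n)).lintegral_comp hg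
  have e2 := (torus_mp n).lintegral_comp hg
  simp only [h, dil]
  refine Eq.trans ?_ (e1.trans e2.symm)
  refine lintegral_congr fun x => ?_
  simp only [Function.comp]
  congr 1
  ext i
  rw [← AddCircle.coe_zsmul, zsmul_eq_mul]
  simp

/-! ### The Fourier pair -/

section FourierPart

open FourierTransform SchwartzMap

variable {E : Type*} [NormedAddCommGroup E] [InnerProductSpace ℝ E] [FiniteDimensional ℝ E]
  [MeasurableSpace E] [BorelSpace E]

lemma continuous_pairing (h : Lp ℂ 2 (volume : Measure E)) :
    Continuous fun f : Lp ℂ 2 (volume : Measure E) => ∫ x, f x * h x := by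
  have := (((ContinuousLinearMap.lsmul ℂ ℂ (E := ℂ)).lpPairing (volume : Measure E) 2 2).flip
    h).continuous
  refine this.congr fun f => ?_
  simp [ContinuousLinearMap.lpPairing_eq_integral]

lemma schwartz_pairing (s : 𝓢(E, ℂ)) (h : Lp ℂ 2 (volume : Measure E)) :
    ∫ x, (𝓕 s) x * h x = ∫ x, s x * (𝓕 h : Lp ℂ 2 (volume : Measure E)) x := by
  have := DFunLike.congr_fun (Lp.fourier_toTemperedDistribution_eq h) s
  simpa [TemperedDistribution.fourier_apply, Lp.toTemperedDistribution_apply] using this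

lemma l2_pairing (f h : Lp ℂ 2 (volume : Measure E)) :
    ∫ x, (𝓕 f : Lp ℂ 2 (volume : Measure E)) x * h x = ∫ x, f x * (𝓕 h : Lp ℂ 2 (volume : Measure E)) x := by
  refine DenseRange.induction_on (e := toLpCLM ℂ (E := E) ℂ 2 (volume : Measure E))
    (p := fun f : Lp ℂ 2 (volume : Measure E) => ∫ x, (𝓕 f : Lp ℂ 2 (volume : Measure E)) x * h x
      = ∫ x, f x * (𝓕 h : Lp ℂ 2 (volume : Measure E)) x)
    (SchwartzMap.denseRange_toLpCLM (p := 2) (μ := (volume : Measure E)) ENNReal.ofNat_ne_top) f ?_ ?_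
  · apply isClosed_eq
    · exact (continuous_pairing h).comp (Lp.fourierTransformₗᵢ E ℂ).continuous
    · exact continuous_pairing _
  · intro s
    have e := schwartz_pairing s h
    rw [SchwartzMap.toLpCLM_apply, SchwartzMap.toLp_fourier_eq]
    calc _ = ∫ x, (𝓕 s) x * h x := by
          apply integral_congr_ae
          filter_upwards [(𝓕 s).coeFn_toLp 2 volume] with x hx
          rw [hx]
      _ = _ := e
      _ = _ := by
          apply integral_congr_ae
          filter_upwards [s.coeFn_toLp 2 volume] with x hx
          rw [hx]

lemma fourier_L1_L2 (g : E → ℂ) (hg : Integrable g) (hg2 : MemLp g 2 volume) :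
    ((𝓕 (hg2.toLp g) : Lp ℂ 2 (volume : Measure E)) : E → ℂ) =ᵐ[volume] 𝓕 g := by
  apply ae_eq_of_integral_contDiff_smul_eq
  · exact (Lp.memLp _).locallyIntegrable (by norm_num)
  · exact (VectorFourier.fourierIntegral_continuous Real.continuous_fourierChar
      (by exact continuous_inner) hg).locallyIntegrable
  · intro s hs hsc
    have hs' : ContDiff ℝ (⊤ : ℕ∞) (fun x => (s x : ℂ)) :=
      Complex.ofRealCLM.contDiff.comp hs
    have hsc' : HasCompactSupport (fun x => (s x : ℂ)) := hsc.comp_left (g := fun r : ℝ => (r : ℂ)) (by simp)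
    let σ : 𝓢(E, ℂ) := hsc'.toSchwartzMap hs'
    have hσ : ∀ x, σ x = (s x : ℂ) := fun x => rfl
    have e1 := schwartz_pairing σ (hg2.toLp g)
    have e2 := VectorFourier.integral_fourierIntegral_smul_eq_flip (L := innerₗ E)
      (μ := volume) (ν := volume) (e := Real.fourierChar) (f := g) (g := fun x => σ x)
      Real.continuous_fourierChar
      (by exact continuous_inner) hg σ.integrable
    simp only [Complex.real_smul, ← hσ]
    rw [← e1]
    have e3 : ∫ x, (𝓕 σ) x * (hg2.toLp g) x = ∫ x, (𝓕 σ) x * g x := by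
      apply integral_congr_ae
      filter_upwards [hg2.coeFn_toLp] with x hx
      rw [hx]
    rw [e3]
    rw [flip_innerₗ] at e2
    simp only [smul_eq_mul] at e2
    calc _ = ∫ x, g x * (𝓕 σ) x :=
        integral_congr_ae (ae_of_all _ fun x => mul_comm _ _)
      _ = _ := e2.symm
      _ = _ := by
        refine integral_congr_ae (ae_of_all _ fun x => ?_)
        exact mul_comm _ _

lemma exists_preimage (Φ : E → ℂ) (hΦ : MemLp Φ 2 volume) : ∃ f : E → ℂ, MemLp f 2 volume ∧
    ∀ g : E → ℂ, Integrable g volume → MemLp g 2 volume → ∫ x, Φ x * g x = ∫ x, f x * 𝓕 g x := by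
  refine ⟨(𝓕⁻ (hΦ.toLp Φ) : Lp ℂ 2 (volume : Measure E)), Lp.memLp _, fun g hg hg2 => ?_⟩
  have := l2_pairing (𝓕⁻ (hΦ.toLp Φ) : Lp ℂ 2 (volume : Measure E)) (hg2.toLp g)
  rw [fourier_fourierInv_eq] at this
  calc _ = _ := by
        apply integral_congr_ae
        filter_upwards [hg2.coeFn_toLp, hΦ.coeFn_toLp] with x hx hy
        rw [← hx, ← hy]
    _ = _ := this
    _ = _ := by
        apply integral_congr_ae
        filter_upwards [fourier_L1_L2 g hg hg2] with x hx
        rw [hx]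

end FourierPart

lemma exists_fourierPair {n : ℕ} (Φ : (Fin n → ℝ) → ℂ) (hΦ : MemLp Φ 2 volume) :
    ∃ φ : (Fin n → ℝ) → ℂ, IsL2FourierPair n φ Φ := by
  have mp := PiLp.volume_preserving_toLp (Fin n)
  have mp' := PiLp.volume_preserving_ofLp (Fin n)
  have hemb : MeasurableEmbedding (WithLp.toLp 2 : (Fin n → ℝ) → EuclideanSpace ℝ (Fin n)) :=
    (MeasurableEquiv.toLp 2 (Fin n → ℝ)).measurableEmbedding
  obtain ⟨f, hf, hfg⟩ := exists_preimage (fun x : EuclideanSpace ℝ (Fin n) => Φ (WithLp.ofLp x))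
    (hΦ.comp_measurePreserving mp')
  have hf' : MemLp (fun x : Fin n → ℝ => f (WithLp.toLp 2 x)) 2 :=
    hf.comp_measurePreserving mp
  have h2pi : (2 * Real.pi) ≠ 0 := Real.two_pi_pos.ne'
  have hsc : MemLp (fun x : Fin n → ℝ => f (WithLp.toLp 2 ((2 * Real.pi)⁻¹ • x))) 2 := by
    have hmap := Measure.map_addHaar_smul (volume : Measure (Fin n → ℝ)) (inv_ne_zero h2pi)
    have h1 : MemLp (fun x : Fin n → ℝ => f (WithLp.toLp 2 x)) 2
        (Measure.map (fun x : Fin n → ℝ => (2 * Real.pi)⁻¹ • x) volume) := by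
      rw [hmap]
      exact hf'.smul_measure ENNReal.ofReal_ne_top
    exact h1.comp_of_map (by fun_prop)
  refine ⟨fun x => (((2 * Real.pi)⁻¹ ^ n : ℝ) : ℂ) * f (WithLp.toLp 2 ((2 * Real.pi)⁻¹ • x)),
    hsc.const_mul _, hΦ, fun g hg hg2 => ?_⟩
  have key := hfg (fun x => g (WithLp.ofLp x)) ((mp'.integrable_comp hg.aestronglyMeasurable).2 hg)
    (hg2.comp_measurePreserving mp')
  rw [← mp.integral_comp hemb, ← mp.integral_comp hemb] at key
  simp only at key
  rw [key]
  have hF : ∀ y : Fin n → ℝ, fourierInt n g ((2 * Real.pi) • y)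
      = FourierTransform.fourier (fun x : EuclideanSpace ℝ (Fin n) => g (WithLp.ofLp x))
        (WithLp.toLp 2 y) := by
    intro y
    rw [Real.fourier_eq', ← mp.integral_comp hemb, fourierInt]
    refine integral_congr_ae (ae_of_all _ fun v => ?_)
    simp only [smul_eq_mul]
    rw [mul_comm]
    congr 2
    simp only [PiLp.inner_apply, Pi.smul_apply, smul_eq_mul, RCLike.inner_apply, conj_trivial]
    push_cast
    rw [Finset.mul_sum, Finset.mul_sum, Finset.sum_mul]
    refine Finset.sum_congr rfl fun i _ => ?_
    ring
  have hsub := Measure.integral_comp_smul (volume : Measure (Fin n → ℝ))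
    (fun x => ((((2 * Real.pi)⁻¹ ^ n : ℝ) : ℂ) * f (WithLp.toLp 2 ((2 * Real.pi)⁻¹ • x)))
      * fourierInt n g x) (2 * Real.pi)
  simp only [smul_smul, inv_mul_cancel₀ h2pi, one_smul, hF] at hsub
  have hc : ((2 * Real.pi)⁻¹ ^ n : ℝ) ≠ 0 := pow_ne_zero _ (inv_ne_zero h2pi)
  simp only [mul_assoc, integral_const_mul] at hsub ⊢
  rw [show Module.finrank ℝ (Fin n → ℝ) = n by simp, ← inv_pow,
    abs_of_pos (by positivity), Complex.real_smul] at hsub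
  exact mul_left_cancel₀ (Complex.ofReal_ne_zero.2 hc) hsub

/-! ### The L² bound -/

/-- The weight `1 / S` with values in `[0, ∞]`. -/
def wS {n : ℕ} (S : RatTrigPoly n) (x : Fin n → ℝ) : ENNReal := ENNReal.ofReal ((S x).re)⁻¹

/-- `∏_{j < M} |τ(λ^j x)|²`. -/
def pT {n : ℕ} (lam : ℕ) (τ : RatTrigPoly n) (M : ℕ) (x : Fin n → ℝ) : ENNReal :=
  ∏ j ∈ Finset.range M, ‖τ (fun i => (lam : ℝ) ^ j * x i)‖ₑ ^ 2

lemma wS_measurable {n : ℕ} (S : RatTrigPoly n) : Measurable (wS S) :=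
  (Complex.measurable_re.comp S.measurable).inv.ennreal_ofReal

lemma pT_measurable {n : ℕ} (lam : ℕ) (τ : RatTrigPoly n) (M : ℕ) : Measurable (pT lam τ M) := by
  refine Finset.measurable_fun_prod _ fun j _ => ?_
  refine Measurable.pow_const ?_ 2
  exact (τ.measurable.comp (by fun_prop)).enorm

lemma wS_per {n : ℕ} (S : RatTrigPoly n) : IsPer n (wS S) := fun x m => by
  simp only [wS, S.periodic]

lemma pT_per {n : ℕ} (lam : ℕ) (τ : RatTrigPoly n) (M : ℕ) : IsPer n (pT lam τ M) := fun x m => by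
  refine Finset.prod_congr rfl fun j _ => ?_
  have := τ.periodic (fun i => (lam : ℝ) ^ j * x i) (fun i => (lam : ℤ) ^ j * m i)
  rw [← this]
  congr 3
  ext i
  push_cast
  ring

lemma pT_succ {n : ℕ} (lam : ℕ) (τ : RatTrigPoly n) (M : ℕ) (x : Fin n → ℝ) :
    pT lam τ (M + 1) x = ‖τ x‖ₑ ^ 2 * pT lam τ M (dil lam n x) := by
  rw [pT, Finset.prod_range_succ', mul_comm]
  congr 1
  · simp
  · refine Finset.prod_congr rfl fun j _ => ?_
    congr 3
    ext i
    simp only [dil]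
    ring

lemma quasi_dil {n lam : ℕ} (hlam : 2 ≤ lam) :
    Measure.QuasiMeasurePreserving (dil lam n) volume volume := by
  have hl : (lam : ℝ) ≠ 0 := by
    have : lam ≠ 0 := by omega
    exact_mod_cast this
  have hd : dil lam n = fun x => (lam : ℝ) • x := by
    ext x i; simp [dil]
  refine ⟨by rw [hd]; fun_prop, ?_⟩
  rw [hd]
  have := Measure.map_addHaar_smul (volume : Measure (Fin n → ℝ)) hl
  exact this ▸ Measure.smul_absolutelyContinuous

lemma quasi_gshift {n lam : ℕ} (ρ : Fin n → ℤ) :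
    Measure.QuasiMeasurePreserving (fun x => gshift lam n x ρ) volume volume :=
  (measurePreserving_add_right (volume : Measure (Fin n → ℝ))
    (fun i => (2 * Real.pi / lam) * (ρ i : ℝ))).quasiMeasurePreserving

lemma card_Lambda (lam n : ℕ) : (Lambda lam n).card = lam ^ n := by
  simp [Lambda, Fintype.card_piFinset]

lemma step_bound {n lam : ℕ} (hlam : 2 ≤ lam) (S τ : RatTrigPoly n)
    (hSreal : ∀ ξ, S.DefinedAt ξ → (S ξ).im = 0 ∧ 0 ≤ (S ξ).re)
    (hSne : ∃ ξ, S ξ ≠ 0)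
    (hsubQMF : ∀ ξ : Fin n → ℝ,
      (S.DefinedAt (dil lam n ξ) ∧ S (dil lam n ξ) ≠ 0) →
      (∀ ρ ∈ Lambda lam n, τ.DefinedAt (gshift lam n ξ ρ) ∧
        S.DefinedAt (gshift lam n ξ ρ) ∧ S (gshift lam n ξ ρ) ≠ 0) →
      0 ≤ ((S (dil lam n ξ)).re)⁻¹
          - ∑ ρ ∈ Lambda lam n,
              ‖τ (gshift lam n ξ ρ)‖ ^ 2 / (S (gshift lam n ξ ρ)).re) (M : ℕ) :
    (lam : ENNReal) ^ n * ∫⁻ x in tbox n, pT lam τ (M + 1) x * wS S x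
      ≤ ∫⁻ x in tbox n, pT lam τ M x * wS S x := by
  have hl : (lam : ℝ) ≠ 0 := by
    have : lam ≠ 0 := by omega
    exact_mod_cast this
  set F : (Fin n → ℝ) → ENNReal := fun x => pT lam τ (M + 1) x * wS S x with hF
  have hFm : Measurable F := (pT_measurable lam τ (M + 1)).mul (wS_measurable S)
  have hFp : IsPer n F := fun x m => by simp only [hF, pT_per lam τ (M + 1) x m, wS_per S x m]
  have hGm : Measurable fun x => pT lam τ M x * wS S x :=
    (pT_measurable lam τ M).mul (wS_measurable S)
  have hGp : IsPer n fun x => pT lam τ M x * wS S x :=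
    fun x m => by simp only [pT_per lam τ M x m, wS_per S x m]
  have e1 : (lam : ENNReal) ^ n * ∫⁻ x in tbox n, F x
      = ∫⁻ x in tbox n, ∑ ρ ∈ Lambda lam n, F (gshift lam n x ρ) := by
    rw [lintegral_finsetSum (f := fun ρ x => F (gshift lam n x ρ)) _
      fun ρ _ => hFm.comp (quasi_gshift ρ).measurable]
    have : ∀ ρ ∈ Lambda lam n, ∫⁻ x in tbox n, F (gshift lam n x ρ) = ∫⁻ x in tbox n, F x :=
      fun ρ _ => per_translate hFm hFp (fun i => (2 * Real.pi / lam) * (ρ i : ℝ))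
    rw [Finset.sum_congr rfl this, Finset.sum_const, card_Lambda, nsmul_eq_mul]
    push_cast
    rfl
  rw [e1, ← per_dilate hlam hGm hGp]
  refine lintegral_mono_ae (ae_restrict_of_ae ?_)
  have hS1 := S.ae_defined
  have hS2 := S.ae_ne_zero hSne
  have hsh : ∀ᵐ x : Fin n → ℝ, ∀ ρ ∈ Lambda lam n, τ.DefinedAt (gshift lam n x ρ) ∧
        S.DefinedAt (gshift lam n x ρ) ∧ S (gshift lam n x ρ) ≠ 0 := by
    rw [Finset.eventually_all]
    intro ρ _
    exact ((quasi_gshift ρ).ae τ.ae_defined).and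
      (((quasi_gshift ρ).ae hS1).and ((quasi_gshift ρ).ae hS2))
  filter_upwards [(quasi_dil hlam).ae hS1, (quasi_dil hlam).ae hS2, hsh] with x h1 h2 h3
  have hq := hsubQMF x ⟨h1, h2⟩ h3
  have e2 : ∀ ρ ∈ Lambda lam n, F (gshift lam n x ρ) = pT lam τ M (dil lam n x) *
      ENNReal.ofReal (‖τ (gshift lam n x ρ)‖ ^ 2 / (S (gshift lam n x ρ)).re) := by
    intro ρ _
    have : pT lam τ M (dil lam n (gshift lam n x ρ)) = pT lam τ M (dil lam n x) := by
      rw [← pT_per lam τ M (dil lam n x) ρ]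
      congr 1
      ext i
      simp only [dil, gshift]
      field_simp
    simp only [hF, pT_succ, this, wS]
    rw [div_eq_mul_inv, ENNReal.ofReal_mul (by positivity), ENNReal.ofReal_pow (norm_nonneg _),
      ofReal_norm]
    ring
  rw [Finset.sum_congr rfl e2, ← Finset.mul_sum, ← ENNReal.ofReal_sum_of_nonneg]
  · refine mul_le_mul_right (ENNReal.ofReal_le_ofReal ?_) _
    linarith
  · intro ρ hρ
    exact div_nonneg (by positivity) (hSreal _ (h3 ρ hρ).2.1).2

lemma enorm_finset_prod' (s : Finset ℕ) (f : ℕ → ℂ) : ‖∏ j ∈ s, f j‖ₑ = ∏ j ∈ s, ‖f j‖ₑ := by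
  classical
  induction s using Finset.induction_on with
  | empty => simp
  | insert a s ha ih => rw [Finset.prod_insert ha, Finset.prod_insert ha, enorm_mul, ih]

lemma pT_eq {n lam : ℕ} (hlam : 2 ≤ lam) (τ : RatTrigPoly n) (M : ℕ) (ξ : Fin n → ℝ) :
    pT lam τ M (((lam : ℝ) ^ M)⁻¹ • ξ)
      = ‖∏ j ∈ Finset.Icc 1 M, τ (fun i => ξ i / (lam : ℝ) ^ j)‖ₑ ^ 2 := by
  have hl : (lam : ℝ) ≠ 0 := by
    have : lam ≠ 0 := by omega
    exact_mod_cast this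
  have h1 : ∏ j ∈ Finset.Icc 1 M, τ (fun i => ξ i / (lam : ℝ) ^ j)
      = ∏ j ∈ Finset.range M, τ (fun i => ξ i / (lam : ℝ) ^ (j + 1)) := by
    rw [Finset.range_eq_Ico, Finset.prod_Ico_add' (fun j => τ (fun i => ξ i / (lam : ℝ) ^ j)) 0 M 1]
    rfl
  rw [h1, ← Finset.prod_range_reflect, enorm_finset_prod', ← Finset.prod_pow, pT]
  refine Finset.prod_congr rfl fun j hj => ?_
  congr 3
  ext i
  have hj' : M - 1 - j + 1 = M - j := by
    have := Finset.mem_range.1 hj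
    omega
  rw [hj']
  have hM : (lam : ℝ) ^ M = (lam : ℝ) ^ j * (lam : ℝ) ^ (M - j) := by
    rw [← pow_add, Nat.add_sub_cancel' (Finset.mem_range.1 hj).le]
  simp only [Pi.smul_apply, smul_eq_mul, hM]
  field_simp

theorem memLp_of_bound {n lam : ℕ} (hlam : 2 ≤ lam) (S τ : RatTrigPoly n)
    (hSreal : ∀ ξ, S.DefinedAt ξ → (S ξ).im = 0 ∧ 0 ≤ (S ξ).re)
    (hS0 : S 0 = 1)
    (hScont : ContinuousAt (fun ξ => S ξ) 0)
    (hSinv : MemLp (fun ξ : Fin n → ℝ => (S ξ)⁻¹) ⊤ volume)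
    (hsubQMF : ∀ ξ : Fin n → ℝ,
      (S.DefinedAt (dil lam n ξ) ∧ S (dil lam n ξ) ≠ 0) →
      (∀ ρ ∈ Lambda lam n, τ.DefinedAt (gshift lam n ξ ρ) ∧
        S.DefinedAt (gshift lam n ξ ρ) ∧ S (gshift lam n ξ ρ) ≠ 0) →
      0 ≤ ((S (dil lam n ξ)).re)⁻¹
          - ∑ ρ ∈ Lambda lam n,
              ‖τ (gshift lam n ξ ρ)‖ ^ 2 / (S (gshift lam n ξ ρ)).re)
    (Φ : (Fin n → ℝ) → ℂ)
    (hΦ : ∀ ξ, Tendsto (fun M : ℕ => ∏ j ∈ Finset.Icc 1 M, τ (fun i => ξ i / (lam : ℝ) ^ j))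
          atTop (𝓝 (Φ ξ))) : MemLp Φ 2 volume := by
  have hSne : ∃ ξ, S ξ ≠ 0 := ⟨0, by rw [hS0]; exact one_ne_zero⟩
  have hl1 : (1 : ℝ) < lam := by exact_mod_cast hlam
  have hl : (lam : ℝ) ≠ 0 := by positivity
  have hmeas : Measurable Φ := by
    refine measurable_of_tendsto_metrizable (fun M => ?_) (tendsto_pi_nhds.2 hΦ)
    refine Finset.measurable_fun_prod _ fun j _ => ?_
    exact τ.measurable.comp (by fun_prop)
  set A : ℕ → ENNReal := fun M => ∫⁻ x in tbox n, pT lam τ M x * wS S x with hA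
  have hA0 : A 0 < ⊤ := by
    have hb : ∀ᵐ x : Fin n → ℝ, pT lam τ 0 x * wS S x
        ≤ eLpNormEssSup (fun ξ : Fin n → ℝ => (S ξ)⁻¹) volume := by
      filter_upwards [S.ae_defined, enorm_ae_le_eLpNormEssSup (fun ξ : Fin n → ℝ => (S ξ)⁻¹) volume]
        with x h1 h2
      refine le_trans ?_ h2
      obtain ⟨h3, h4⟩ := hSreal x h1
      have h5 : S x = (((S x).re : ℝ) : ℂ) := by
        apply Complex.ext <;> simp [h3]
      have h6 : ‖(S x)⁻¹‖ = ((S x).re)⁻¹ := by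
        rw [h5, norm_inv, Complex.norm_real, Real.norm_of_nonneg h4]
        simp
      rw [← ofReal_norm, h6]
      simp [pT, wS]
    have hC : eLpNormEssSup (fun ξ : Fin n → ℝ => (S ξ)⁻¹) volume < ⊤ := by
      have := hSinv.2
      rwa [eLpNorm_exponent_top] at this
    have hvol : volume (tbox n) < ⊤ := by
      rw [tbox, volume_pi_pi]
      exact ENNReal.prod_lt_top fun i _ => by
        rw [Real.volume_Ioc]; exact ENNReal.ofReal_lt_top
    calc A 0 ≤ ∫⁻ x in tbox n, eLpNormEssSup (fun ξ : Fin n → ℝ => (S ξ)⁻¹) volume :=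
          lintegral_mono_ae (ae_restrict_of_ae hb)
      _ = eLpNormEssSup (fun ξ : Fin n → ℝ => (S ξ)⁻¹) volume * volume (tbox n) := by simp
      _ < ⊤ := ENNReal.mul_lt_top hC hvol
  have hAM : ∀ M, ((lam : ENNReal) ^ n) ^ M * A M ≤ A 0 := by
    intro M
    induction M with
    | zero => simp
    | succ M ih =>
      refine le_trans ?_ ih
      rw [pow_succ, mul_assoc]
      exact mul_le_mul_right (step_bound hlam S τ hSreal hSne hsubQMF M) _
  set h : ℕ → (Fin n → ℝ) → ENNReal := fun M =>
    (tbox n).indicator (fun x => pT lam τ M x * wS S x) with hh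
  have hhm : ∀ M, Measurable (h M) := fun M =>
    ((pT_measurable lam τ M).mul (wS_measurable S)).indicator (tbox_measurable n)
  have hu : ∀ M, ∫⁻ ξ, h M (((lam : ℝ) ^ M)⁻¹ • ξ) ≤ A 0 := by
    intro M
    have hr : ((lam : ℝ) ^ M)⁻¹ ≠ 0 := inv_ne_zero (pow_ne_zero _ hl)
    rw [← lintegral_map (hhm M) (measurable_const_smul _), Measure.map_addHaar_smul _ hr,
      lintegral_smul_measure, hh, lintegral_indicator (tbox_measurable n)]
    refine le_trans (le_of_eq ?_) (hAM M)
    rw [smul_eq_mul]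
    congr 1
    rw [inv_pow, inv_inv, abs_of_pos (by positivity), show Module.finrank ℝ (Fin n → ℝ) = n by simp,
      ENNReal.ofReal_pow (by positivity), ENNReal.ofReal_pow (by positivity), ENNReal.ofReal_natCast,
      ← pow_mul, ← pow_mul, mul_comm]
  have hlim : ∀ ξ, Tendsto (fun M => h M (((lam : ℝ) ^ M)⁻¹ • ξ)) atTop (𝓝 (‖Φ ξ‖ₑ ^ 2)) := by
    intro ξ
    have hz : Tendsto (fun M : ℕ => ((lam : ℝ) ^ M)⁻¹ • ξ) atTop (𝓝 0) := by
      have h0 : Tendsto (fun M : ℕ => ((lam : ℝ) ^ M)⁻¹) atTop (𝓝 0) :=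
        (tendsto_pow_atTop_atTop_of_one_lt hl1).inv_tendsto_atTop
      simpa using h0.smul_const ξ
    have hnb : tbox n ∈ 𝓝 (0 : Fin n → ℝ) := by
      refine set_pi_mem_nhds Set.finite_univ fun i _ => ?_
      refine Ioc_mem_nhds ?_ ?_ <;> simp <;> linarith [Real.pi_pos]
    have hw : Tendsto (fun M : ℕ => wS S (((lam : ℝ) ^ M)⁻¹ • ξ)) atTop (𝓝 1) := by
      have h1 : Tendsto (fun M : ℕ => ((S (((lam : ℝ) ^ M)⁻¹ • ξ)).re)⁻¹) atTop (𝓝 1) := by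
        have h2 : Tendsto (fun M : ℕ => (S (((lam : ℝ) ^ M)⁻¹ • ξ)).re) atTop (𝓝 (S 0).re) :=
          (Complex.continuous_re.tendsto _).comp (hScont.tendsto.comp hz)
        rw [hS0] at h2
        simpa using h2.inv₀ (by simp)
      simpa [wS] using ENNReal.tendsto_ofReal h1
    have hp : Tendsto (fun M : ℕ => pT lam τ M (((lam : ℝ) ^ M)⁻¹ • ξ)) atTop
        (𝓝 (‖Φ ξ‖ₑ ^ 2)) := by
      simp_rw [pT_eq hlam]
      exact ENNReal.Tendsto.pow (hΦ ξ).enorm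
    have hmul := ENNReal.Tendsto.mul hp (Or.inr ENNReal.one_ne_top) hw (Or.inl one_ne_zero)
    rw [mul_one] at hmul
    refine hmul.congr' ?_
    filter_upwards [hz.eventually hnb] with M hM
    simp only [hh]
    rw [Set.indicator_of_mem hM]
  have hfin : ∫⁻ ξ, ‖Φ ξ‖ₑ ^ 2 ≤ A 0 := by
    calc ∫⁻ ξ, ‖Φ ξ‖ₑ ^ 2
        = ∫⁻ ξ, liminf (fun M => h M (((lam : ℝ) ^ M)⁻¹ • ξ)) atTop :=
          lintegral_congr fun ξ => (hlim ξ).liminf_eq.symm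
      _ ≤ liminf (fun M => ∫⁻ ξ, h M (((lam : ℝ) ^ M)⁻¹ • ξ)) atTop :=
          lintegral_liminf_le fun M => (hhm M).comp (measurable_const_smul _)
      _ ≤ liminf (fun _ : ℕ => A 0) atTop := liminf_le_liminf (Eventually.of_forall hu)
      _ = A 0 := by simp
  refine ⟨hmeas.aestronglyMeasurable, ?_⟩
  rw [eLpNorm_lt_top_iff_lintegral_rpow_enorm_lt_top (by norm_num) (by norm_num)]
  simpa using hfin.trans_lt hA0

/-- under the oblique sub-QMF condition, the infinite product
Π_{j=1}^∞ τ(λ^{−j}ξ) converges a.e. to a function Φ ∈ L²(ℝⁿ) with Φ(λξ) = τ(ξ)Φ(ξ)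
a.e.; consequently Φ is the Fourier transform of a refinable L² function φ_τ with
refinement mask τ. -/
theorem refinable_function_from_rational_mask (lam n : ℕ) (hlam : 2 ≤ lam) (hn : 1 ≤ n)
    (S : RatTrigPoly n)
    (hSreal : ∀ ξ, S.DefinedAt ξ → (S ξ).im = 0 ∧ 0 ≤ (S ξ).re)
    (hSne : ∃ ξ, S.DefinedAt ξ ∧ S ξ ≠ 0)
    (hSdef0 : S.DefinedAt 0) (hS0 : S 0 = 1)
    (hScont : ContinuousAt (fun ξ => S ξ) 0)
    (hSinv : MeasureTheory.MemLp (fun ξ : Fin n → ℝ => (S ξ)⁻¹) ⊤ MeasureTheory.volume)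
    (τ : RatTrigPoly n) (hτdef : τ.DefinedAt 0) (hτ0 : τ 0 = 1)
    (hsubQMF : ∀ ξ : Fin n → ℝ,
      (S.DefinedAt (dil lam n ξ) ∧ S (dil lam n ξ) ≠ 0) →
      (∀ ρ ∈ Lambda lam n, τ.DefinedAt (gshift lam n ξ ρ) ∧
        S.DefinedAt (gshift lam n ξ ρ) ∧ S (gshift lam n ξ ρ) ≠ 0) →
      0 ≤ ((S (dil lam n ξ)).re)⁻¹
          - ∑ ρ ∈ Lambda lam n,
              ‖τ (gshift lam n ξ ρ)‖ ^ 2 / (S (gshift lam n ξ ρ)).re) :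
    ∃ Φ : (Fin n → ℝ) → ℂ,
      (∀ᵐ ξ : Fin n → ℝ ∂MeasureTheory.volume,
        Filter.Tendsto
          (fun M : ℕ => ∏ j ∈ Finset.Icc 1 M, τ (fun i => ξ i / (lam : ℝ) ^ j))
          Filter.atTop (𝓝 (Φ ξ))) ∧
      MeasureTheory.MemLp Φ 2 MeasureTheory.volume ∧
      (∀ᵐ ξ : Fin n → ℝ ∂MeasureTheory.volume, Φ (dil lam n ξ) = τ ξ * Φ ξ) ∧
      ∃ φ : (Fin n → ℝ) → ℂ, IsL2FourierPair n φ Φ := by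
  have hconv := prod_converges hlam τ hτdef hτ0
  choose Φ hΦ using hconv
  have hmem : MemLp Φ 2 volume :=
    memLp_of_bound hlam S τ hSreal hS0 hScont hSinv hsubQMF Φ hΦ
  refine ⟨Φ, ae_of_all _ hΦ, hmem, ae_of_all _ fun ξ => ?_, exists_fourierPair Φ hmem⟩
  have hl : (lam : ℝ) ≠ 0 := by
    have : lam ≠ 0 := by omega
    exact_mod_cast this
  have h1 := (tendsto_add_atTop_iff_nat 1).2 (hΦ (dil lam n ξ))
  have h2 := (hΦ ξ).const_mul (τ ξ)
  refine tendsto_nhds_unique h1 (h2.congr fun M => ?_)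
  have e : ∀ (η : Fin n → ℝ) (K : ℕ), ∏ j ∈ Finset.Icc 1 K, τ (fun i => η i / (lam : ℝ) ^ j)
      = ∏ j ∈ Finset.range K, τ (fun i => η i / (lam : ℝ) ^ (j + 1)) := by
    intro η K
    rw [Finset.range_eq_Ico, Finset.prod_Ico_add' (fun j => τ (fun i => η i / (lam : ℝ) ^ j)) 0 K 1]
    rfl
  rw [e, e, Finset.prod_range_succ', mul_comm]
  congr 1
  · refine Finset.prod_congr rfl fun j _ => ?_
    congr 1
    ext i
    simp only [dil]
    field_simp
    ring
  · congr 1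
    ext i
    simp only [dil]
    field_simp
    simp
end
end
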